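/- Let A>0 and B∈ℝ. (1) If A+B<0, then there exists n₀∈ℕ (depending only on A and B) such that for every integer n≥n₀ the function ζ_n has exactly one zero x_n in (0,1); moreover x_n∈(0,1+(A+B)/(An)), and the sequence n↦x_n is strictly increasing on [n₀,∞). (2) If A+2B≤0, then for every integer n≥1, ζ_n has no zero in (−∞,0]. (3) If A+2B≥0, then for every integer n≥2, ζ_n has no zero in [0,1]. -/

import Mathlib

open MeasureTheory Real Set

/-- Rising factorial (Pochhammer symbol) `(a)_k`. -/
noncomputable def poch (a : ℝ) (k : ℕ) : ℝ := (ascPochhammer ℝ k).eval a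

/-- Gauss hypergeometric function `F(a,b;c;x)`: given by Euler's integral representation
when `c > b > 0` (valid for all `x ∈ (-∞,1]`), and by the defining power series otherwise. -/
noncomputable def hyper (a b c x : ℝ) : ℝ :=
  if b < c ∧ 0 < b then
    Real.Gamma c / (Real.Gamma b * Real.Gamma (c - b)) *
      ∫ t in (0:ℝ)..1, t ^ (b - 1) * (1 - t) ^ (c - b - 1) * (1 - x * t) ^ (-a)
  else
    ∑' k : ℕ, poch a k * poch b k / (poch c k * (Nat.factorial k)) * x ^ k

/-- The coefficient `a_t = (t - √(t²+8))/2`. -/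
noncomputable def aCoef (t : ℝ) : ℝ := (t - Real.sqrt (t ^ 2 + 8)) / 2

/-- The coefficient `b_t = (t + √(t²+8))/2`. -/
noncomputable def bCoef (t : ℝ) : ℝ := (t + Real.sqrt (t ^ 2 + 8)) / 2

/-- `F_t(x) = F(a_t, b_t; t+1; x)`. -/
noncomputable def Fhyp (t x : ℝ) : ℝ := hyper (aCoef t) (bCoef t) (t + 1) x

/-- The dispersion function `ζ_n` associated with the quadratic profile `f₀(r) = Ar² + B`. -/
noncomputable def zetaDisp (A B : ℝ) (n : ℕ) (x : ℝ) : ℝ :=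
  Fhyp n x * (1 - x + (A + 2 * B) / (A * ((n : ℝ) + 1)) * x)
    + ∫ τ in (0:ℝ)..1, Fhyp n (τ * x) * τ ^ n * (-1 + 2 * x * τ)


/-- The Euler-type integral. -/
noncomputable def GInt (p q r x : ℝ) : ℝ :=
  ∫ t in (0:ℝ)..1, t ^ p * (1 - t) ^ q * (1 - x * t) ^ r

lemma one_sub_integrable {q : ℝ} (hq : -1 < q) :
    IntervalIntegrable (fun t : ℝ => (1 - t) ^ q) volume 0 1 := by
  have h := (intervalIntegral.intervalIntegrable_rpow' (a := 0) (b := 1) hq).comp_sub_left 1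
  simpa using h.symm

lemma base_integrable {p q : ℝ} (hp : 0 ≤ p) (hq : -1 < q) :
    IntervalIntegrable (fun t : ℝ => t ^ p * (1 - t) ^ q) volume 0 1 := by
  apply (one_sub_integrable hq).continuousOn_mul
  exact (continuous_id.rpow_const (fun _ => Or.inr hp)).continuousOn

lemma G_integrable {p q r x : ℝ} (hp : 0 ≤ p) (hq : -1 < q) (h : x < 1 ∨ (x ≤ 1 ∧ 0 ≤ r)) :
    IntervalIntegrable (fun t : ℝ => t ^ p * (1 - t) ^ q * (1 - x * t) ^ r) volume 0 1 := by
  apply (base_integrable hp hq).mul_continuousOn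
  apply ContinuousOn.rpow_const (by fun_prop)
  intro t ht
  rw [uIcc_of_le zero_le_one] at ht
  rcases h with h | h
  · left
    have : x * t < 1 := by
      rcases le_or_gt x 0 with h0 | h0
      · nlinarith [ht.1, ht.2]
      · nlinarith [ht.1, ht.2]
    linarith
  · right; exact h.2

lemma one_sub_pos {x t : ℝ} (hx : x < 1) (h0 : 0 ≤ t) (h1 : t ≤ 1) : 0 < 1 - x * t := by
  rcases le_or_gt x 0 with h | h
  · nlinarith
  · nlinarith

lemma G_pos {p q r x : ℝ} (hp : 0 ≤ p) (hq : -1 < q) (h : x < 1) : 0 < GInt p q r x := by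
  apply intervalIntegral.intervalIntegral_pos_of_pos_on (G_integrable hp hq (Or.inl h)) _ one_pos
  intro t ht
  have h1 := one_sub_pos h ht.1.le ht.2.le
  have h2 : 0 < 1 - t := by linarith [ht.2]
  have h3 := ht.1
  positivity

lemma G_nonneg {p q r x : ℝ} (h : x ≤ 1) : 0 ≤ GInt p q r x := by
  apply intervalIntegral.integral_nonneg zero_le_one
  intro t ht
  have h1 : 0 ≤ 1 - x * t := by nlinarith [ht.1, ht.2]
  have h2 : 0 ≤ 1 - t := by linarith [ht.2]
  have h3 := ht.1
  positivity

lemma G_anti {p q r : ℝ} (hp : 0 ≤ p) (hq : -1 < q) (hr : 0 ≤ r) :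
    AntitoneOn (GInt p q r) (Iic 1) := by
  intro x hx y hy hxy
  apply intervalIntegral.integral_mono_on zero_le_one (G_integrable hp hq (Or.inr ⟨hy, hr⟩))
    (G_integrable hp hq (Or.inr ⟨hx, hr⟩))
  intro t ht
  have h1 : 0 ≤ 1 - y * t := by nlinarith [ht.1, ht.2, mem_Iic.1 hy]
  have h2 : 0 ≤ 1 - t := by linarith [ht.2]
  have h3 := ht.1
  have h4 : 1 - y * t ≤ 1 - x * t := by nlinarith
  gcongr

lemma G_deriv {p q r x : ℝ} (hp : 0 ≤ p) (hq : -1 < q) (hx : x < 1) :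
    HasDerivAt (GInt p q r) (-r * GInt (p + 1) q (r - 1) x) x := by
  set m : ℝ := min 1 ((1 - x) / 2) with hm
  have hmpos : 0 < m := lt_min one_pos (by linarith)
  set M : ℝ := 1 + |x| + (1 - x) / 2 with hM
  have key : ∀ y ∈ Ioo (x - (1 - x) / 2) (x + (1 - x) / 2), ∀ t : ℝ, 0 ≤ t → t ≤ 1 →
      m ≤ 1 - y * t ∧ 1 - y * t ≤ M := by
    intro y hy t h0 h1
    constructor
    · have e1 : m ≤ 1 := min_le_left _ _
      have e2 : m ≤ (1 - x) / 2 := min_le_right _ _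
      have : m ≤ 1 - y := by linarith [hy.2]
      nlinarith
    · have := neg_abs_le x
      have := abs_nonneg x
      have h5 : -y ≤ |x| + (1 - x) / 2 := by linarith [hy.1]
      nlinarith
  have hmain := intervalIntegral.hasDerivAt_integral_of_dominated_loc_of_deriv_le
    (μ := volume) (a := 0) (b := 1) (x₀ := x)
    (s := Ioo (x - (1 - x) / 2) (x + (1 - x) / 2))
    (F := fun y t => t ^ p * (1 - t) ^ q * (1 - y * t) ^ r)
    (F' := fun y t => -r * (t ^ (p + 1) * (1 - t) ^ q * (1 - y * t) ^ (r - 1)))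
    (bound := fun t => |r| * ((t ^ (p + 1) * (1 - t) ^ q) * (m ^ (r - 1) + M ^ (r - 1))))
    (Ioo_mem_nhds (by linarith) (by linarith)) ?_ (G_integrable hp hq (Or.inl hx)) ?_ ?_ ?_ ?_
  · have h2 := hmain.2
    rw [intervalIntegral.integral_const_mul] at h2
    exact h2
  · filter_upwards [Iio_mem_nhds hx] with y hy
    have := (G_integrable (r := r) hp hq (Or.inl hy)).aestronglyMeasurable
    rwa [uIoc_of_le zero_le_one]
  · have := ((G_integrable (r := r - 1) (p := p + 1) (by linarith) hq
      (Or.inl hx)).const_mul (-r)).aestronglyMeasurable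
    rwa [uIoc_of_le zero_le_one]
  · refine Filter.Eventually.of_forall fun t ht y hy => ?_
    rw [uIoc_of_le zero_le_one] at ht
    obtain ⟨k1, k2⟩ := key y hy t ht.1.le ht.2
    have h2 : 0 ≤ 1 - t := by linarith [ht.2]
    have h3 := ht.1
    have h4 : 0 < 1 - y * t := by linarith
    have hMp : 0 < M := by linarith
    rw [norm_mul, norm_neg, Real.norm_eq_abs, Real.norm_eq_abs,
      abs_of_nonneg (a := t ^ (p + 1) * (1 - t) ^ q * (1 - y * t) ^ (r - 1)) (by positivity)]
    apply mul_le_mul_of_nonneg_left _ (abs_nonneg r)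
    apply mul_le_mul_of_nonneg_left _ (by positivity)
    have hm' : 0 ≤ m ^ (r - 1) := by positivity
    have hM' : 0 ≤ M ^ (r - 1) := by positivity
    rcases le_or_gt 0 (r - 1) with hr | hr
    · have := Real.rpow_le_rpow h4.le k2 hr
      linarith
    · have := Real.rpow_le_rpow_of_nonpos hmpos k1 hr.le
      linarith
  · exact ((base_integrable (by linarith) hq).mul_const _).const_mul _
  · refine Filter.Eventually.of_forall fun t ht y hy => ?_
    rw [uIoc_of_le zero_le_one] at ht
    obtain ⟨k1, k2⟩ := key y hy t ht.1.le ht.2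
    have h4 : 0 < 1 - y * t := by linarith
    have hd : HasDerivAt (fun y : ℝ => 1 - y * t) (-t) y := by
      simpa using ((hasDerivAt_id y).mul_const t).const_sub 1
    have := (hd.rpow_const (p := r) (Or.inl h4.ne')).const_mul (t ^ p * (1 - t) ^ q)
    refine this.congr_deriv ?_
    rw [Real.rpow_add_one ht.1.ne']
    ring

/-- The total derivative identity behind the hypergeometric equation. -/
lemma G_ode {n r x : ℝ} (hn : 1 ≤ n) (hr0 : 0 < r) (hr1 : r < 1) (hx : x < 1)
    (hrel : r * (n + r) = 2) :
    x * (1 - x) * (r * (r - 1) * GInt (n + r + 1) (-r) (r - 2) x)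
      + (n + 1) * (1 - x) * (-r * GInt (n + r) (-r) (r - 1) x)
      + 2 * GInt (n + r - 1) (-r) r x = 0 := by
  have i1 := G_integrable (p := n + r + 1) (q := -r) (r := r - 2) (by linarith) (by linarith)
    (Or.inl hx)
  have i2 := G_integrable (p := n + r) (q := -r) (r := r - 1) (by linarith) (by linarith)
    (Or.inl hx)
  have i3 := G_integrable (p := n + r - 1) (q := -r) (r := r) (by linarith) (by linarith)
    (Or.inl hx)
  have j1 := i1.const_mul (x * (1 - x) * (r * (r - 1)))
  have j2 := i2.const_mul ((n + 1) * (1 - x) * (-r))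
  have j3 := i3.const_mul 2
  have ftc := intervalIntegral.integral_eq_sub_of_hasDerivAt_of_le zero_le_one
    (f := fun t : ℝ => r * (t ^ (n + r) * (1 - t) ^ (1 - r) * (1 - x * t) ^ (r - 1)))
    (f' := fun t : ℝ => (x * (1 - x) * (r * (r - 1))
        * (t ^ (n + r + 1) * (1 - t) ^ (-r) * (1 - x * t) ^ (r - 2))
      + (n + 1) * (1 - x) * (-r) * (t ^ (n + r) * (1 - t) ^ (-r) * (1 - x * t) ^ (r - 1)))
      + 2 * (t ^ (n + r - 1) * (1 - t) ^ (-r) * (1 - x * t) ^ r)) ?_ ?_ ((j1.add j2).add j3)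
  · rw [intervalIntegral.integral_add (j1.add j2) j3, intervalIntegral.integral_add j1 j2,
      intervalIntegral.integral_const_mul, intervalIntegral.integral_const_mul,
      intervalIntegral.integral_const_mul] at ftc
    have z1 : (0:ℝ) ^ (n + r) = 0 := Real.zero_rpow (by linarith)
    have z2 : (0:ℝ) ^ (1 - r) = 0 := Real.zero_rpow (by linarith)
    simp only [sub_self, z1, z2, mul_zero, zero_mul] at ftc
    simp only [GInt]
    linarith
  · apply ContinuousOn.const_mul
    apply ContinuousOn.mul
    · apply ContinuousOn.mul
      · exact (continuous_id.rpow_const (fun _ => Or.inr (by linarith))).continuousOn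
      · exact ((continuous_const.sub continuous_id).rpow_const
          (fun _ => Or.inr (by linarith))).continuousOn
    · apply ContinuousOn.rpow_const (by fun_prop)
      intro t ht
      exact Or.inl (one_sub_pos hx ht.1 ht.2).ne'
  · intro t ht
    have h1 := one_sub_pos hx ht.1.le ht.2.le
    have h2 : 0 < 1 - t := by linarith [ht.2]
    have h3 := ht.1
    have d1 : HasDerivAt (fun t : ℝ => t ^ (n + r)) ((n + r) * t ^ (n + r - 1)) t :=
      Real.hasDerivAt_rpow_const (Or.inl h3.ne')
    have d2 : HasDerivAt (fun t : ℝ => (1 - t) ^ (1 - r)) (-1 * (1 - r) * (1 - t) ^ (1 - r - 1)) t :=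
      HasDerivAt.rpow_const (by simpa using (hasDerivAt_id t).const_sub 1) (Or.inl h2.ne')
    have d3 : HasDerivAt (fun t : ℝ => (1 - x * t) ^ (r - 1))
        (-x * (r - 1) * (1 - x * t) ^ (r - 1 - 1)) t :=
      HasDerivAt.rpow_const (by simpa using ((hasDerivAt_id t).const_mul x).const_sub 1)
        (Or.inl h1.ne')
    have := ((d1.mul d2).mul d3).const_mul r
    refine this.congr_deriv ?_
    have e1 : t ^ (n + r) = t ^ (n + r - 1) * t := by
      rw [← Real.rpow_add_one h3.ne']; ring_nf
    have e2 : t ^ (n + r + 1) = t ^ (n + r - 1) * t * t := by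
      rw [Real.rpow_add_one h3.ne', e1]
    have e3 : (1 - t) ^ (1 - r) = (1 - t) ^ (-r) * (1 - t) := by
      rw [← Real.rpow_add_one h2.ne']; ring_nf
    have e4 : (1 - t) ^ (1 - r - 1) = (1 - t) ^ (-r) := by ring_nf
    have e5 : (1 - x * t) ^ (r - 1) = (1 - x * t) ^ (r - 2) * (1 - x * t) := by
      rw [← Real.rpow_add_one h1.ne']; ring_nf
    have e6 : (1 - x * t) ^ (r - 1 - 1) = (1 - x * t) ^ (r - 2) := by ring_nf
    have e7 : (1 - x * t) ^ r = (1 - x * t) ^ (r - 2) * (1 - x * t) * (1 - x * t) := by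
      rw [← e5, ← Real.rpow_add_one h1.ne']; ring_nf
    simp only [Pi.mul_apply]
    rw [e6, e7, e5, e4, e3, e2, e1]
    linear_combination (t ^ (n + r - 1) * (1 - t) ^ (-r)
      * ((1 - x * t) ^ (r - 2) * (1 - x * t) * (1 - x * t))) * hrel

/-- The qualitative properties of `F_n` that are used. -/
structure HD (n : ℕ) (f f1 f2 : ℝ → ℝ) : Prop where
  d0 : ∀ x < 1, HasDerivAt f (f1 x) x
  d1 : ∀ x < 1, HasDerivAt f1 (f2 x) x
  ode : ∀ x < 1, x * (1 - x) * f2 x + (n + 1) * (1 - x) * f1 x + 2 * f x = 0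
  pos : ∀ x < 1, 0 < f x
  neg : ∀ x < 1, f1 x < 0
  conc : ∀ x < 1, f2 x ≤ 0
  one : 0 ≤ f 1
  anti : AntitoneOn f (Iic 1)

lemma Fhyp_one (x : ℝ) : Fhyp (1:ℕ) x = 1 - x := by
  have hs : Real.sqrt ((1:ℝ) ^ 2 + 8) = 3 := by
    rw [show (1:ℝ) ^ 2 + 8 = 3 ^ 2 by norm_num]; exact Real.sqrt_sq (by norm_num)
  have ha : aCoef 1 = -1 := by unfold aCoef; rw [hs]; norm_num
  have hb : bCoef 1 = 2 := by unfold bCoef; rw [hs]; norm_num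
  unfold Fhyp hyper
  push_cast
  rw [ha, hb, if_neg (by norm_num)]
  rw [tsum_eq_sum (s := Finset.range 2)]
  · simp [Finset.sum_range_succ, poch, ascPochhammer_succ_right]
    norm_num
    ring
  · intro k hk
    have hk2 : 2 ≤ k := by simpa [Nat.succ_le_iff] using hk
    have : poch (-1) k = 0 := by
      obtain ⟨j, rfl⟩ := Nat.exists_eq_add_of_le hk2
      unfold poch
      rw [← ascPochhammer_mul]
      simp [ascPochhammer_succ_right]
    simp [this]

lemma HD_one : HD 1 (Fhyp (1:ℕ)) (fun _ => -1) (fun _ => 0) := by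
  have h : Fhyp (1:ℕ) = fun x => 1 - x := funext Fhyp_one
  rw [h]
  constructor
  · intro x _; simpa using (hasDerivAt_id x).const_sub 1
  · intro x _; exact hasDerivAt_const x _
  · intro x _; push_cast; ring
  · intro x hx; linarith
  · intro x _; norm_num
  · intro x _; exact le_rfl
  · norm_num
  · intro x _ y _ hxy; simp only; linarith

lemma HD_two (n : ℕ) (hn : 2 ≤ n) : ∃ f1 f2, HD n (Fhyp n) f1 f2 := by
  have hn' : (2:ℝ) ≤ n := by exact_mod_cast hn
  set s := Real.sqrt ((n:ℝ) ^ 2 + 8) with hs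
  have hsq : s ^ 2 = (n:ℝ) ^ 2 + 8 := Real.sq_sqrt (by positivity)
  have hs0 : 0 ≤ s := Real.sqrt_nonneg _
  have hsn : (n:ℝ) < s := by nlinarith
  have hsn2 : s < n + 2 := by nlinarith
  set r := (s - n) / 2 with hr
  have hr0 : 0 < r := by rw [hr]; linarith
  have hr1 : r < 1 := by rw [hr]; linarith
  have hrel : r * (n + r) = 2 := by rw [hr]; nlinarith
  have ha : aCoef n = -r := by unfold aCoef; rw [← hs, hr]; ring
  have hb : bCoef n = n + r := by unfold bCoef; rw [← hs, hr]; ring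
  obtain ⟨C, hC, hF⟩ : ∃ C : ℝ, 0 < C ∧ Fhyp n = fun x => C * GInt (n + r - 1) (-r) r x := by
    refine ⟨Real.Gamma ((n:ℝ) + 1) / (Real.Gamma ((n:ℝ) + r) * Real.Gamma ((n:ℝ) + 1 - (n + r))),
      ?_, ?_⟩
    rotate_left
    · funext x
      unfold Fhyp hyper
      rw [ha, hb, if_pos ⟨by linarith, by linarith⟩]
      rw [show (n:ℝ) + 1 - (n + r) - 1 = -r by ring, neg_neg]
      rfl
    · have g1 : 0 < Real.Gamma ((n:ℝ) + 1) := Real.Gamma_pos_of_pos (by linarith)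
      have g2 : 0 < Real.Gamma ((n:ℝ) + r) := Real.Gamma_pos_of_pos (by linarith)
      have g3 : 0 < Real.Gamma ((n:ℝ) + 1 - (n + r)) := Real.Gamma_pos_of_pos (by linarith)
      positivity
  refine ⟨fun x => C * (-r * GInt (n + r) (-r) (r - 1) x),
    fun x => C * (r * (r - 1) * GInt (n + r + 1) (-r) (r - 2) x), ?_⟩
  rw [hF]
  have p1 : (0:ℝ) ≤ n + r - 1 := by linarith
  have q1 : -1 < -r := by linarith
  constructor
  · intro x hx
    have := (G_deriv (r := r) p1 q1 hx).const_mul C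
    rwa [show (n:ℝ) + r - 1 + 1 = n + r by ring] at this
  · intro x hx
    have := ((G_deriv (p := n + r) (r := r - 1) (by linarith) q1 hx).const_mul (-r)).const_mul C
    refine this.congr_deriv ?_
    rw [show r - 1 - 1 = r - 2 by ring]; ring
  · intro x hx
    have := G_ode (n := n) (by linarith) hr0 hr1 hx hrel
    linear_combination C * this
  · intro x hx
    exact mul_pos hC (G_pos p1 q1 hx)
  · intro x hx
    have := G_pos (p := n + r) (r := r - 1) (by linarith) q1 hx
    have h2 : 0 < C * (r * GInt (n + r) (-r) (r - 1) x) := by positivity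
    linarith
  · intro x hx
    have := G_pos (p := n + r + 1) (r := r - 2) (by linarith) q1 hx
    have h3 : 0 < 1 - r := by linarith
    have h2 : 0 < C * (r * (1 - r) * GInt (n + r + 1) (-r) (r - 2) x) := by positivity
    linarith
  · exact mul_nonneg hC.le (G_nonneg le_rfl)
  · intro x hx y hy hxy
    exact mul_le_mul_of_nonneg_left (G_anti p1 q1 hr0.le hx hy hxy) hC.le

lemma int_formula {n : ℕ} {f f1 f2 : ℝ → ℝ} (h : HD n f f1 f2) {x y : ℝ} (hy : 0 ≤ y)
    (hxy : y * x < 1) :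
    ((n:ℝ) + 1) * ∫ τ in (0:ℝ)..y, f (τ * x) * τ ^ n * (-1 + 2 * x * τ)
      = y ^ (n + 1) * ((y * x) * (1 - y * x) * f1 (y * x) - (1 - 2 * (y * x)) * f (y * x)) := by
  have hlt : ∀ τ ∈ uIcc 0 y, τ * x < 1 := by
    intro τ hτ
    rw [uIcc_of_le hy] at hτ
    rcases le_or_gt x 0 with h0 | h0
    · nlinarith [hτ.1]
    · nlinarith [hτ.2]
  have hder : ∀ τ ∈ uIcc 0 y, HasDerivAt (fun τ : ℝ => τ ^ (n + 1) *
      ((τ * x) * (1 - τ * x) * f1 (τ * x) - (1 - 2 * (τ * x)) * f (τ * x)))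
      (((n:ℝ) + 1) * (f (τ * x) * τ ^ n * (-1 + 2 * x * τ))) τ := by
    intro τ hτ
    have hs := hlt τ hτ
    have l : HasDerivAt (fun τ : ℝ => τ * x) x τ := by
      simpa using (hasDerivAt_id τ).mul_const x
    have e0 : HasDerivAt (fun τ : ℝ => f (τ * x)) (f1 (τ * x) * x) τ :=
      HasDerivAt.comp τ (h.d0 _ hs) l
    have e1 : HasDerivAt (fun τ : ℝ => f1 (τ * x)) (f2 (τ * x) * x) τ :=
      HasDerivAt.comp τ (h.d1 _ hs) l
    have e2 : HasDerivAt (fun τ : ℝ => τ ^ (n + 1)) (((n:ℝ) + 1) * τ ^ n) τ := by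
      simpa using hasDerivAt_pow (n + 1) τ
    have e3 : HasDerivAt (fun τ : ℝ => (τ * x) * (1 - τ * x)) (x * (1 - τ * x) + τ * x * (-x)) τ :=
      l.mul (l.const_sub 1)
    have e4 : HasDerivAt (fun τ : ℝ => 1 - 2 * (τ * x)) (-(2 * x)) τ :=
      (l.const_mul 2).const_sub 1
    have := e2.mul ((e3.mul e1).sub (e4.mul e0))
    refine this.congr_deriv ?_
    have o := h.ode _ hs
    simp only [Pi.mul_apply, Pi.sub_apply]
    linear_combination τ ^ (n + 1) * x * o
  rw [← intervalIntegral.integral_const_mul,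
    intervalIntegral.integral_eq_sub_of_hasDerivAt hder ?_]
  · simp
  · apply ContinuousOn.intervalIntegrable
    have : ContinuousOn (fun τ : ℝ => f (τ * x)) (uIcc 0 y) := by
      intro τ hτ
      apply ContinuousAt.continuousWithinAt
      exact ContinuousAt.comp (f := fun τ : ℝ => τ * x) (h.d0 _ (hlt τ hτ)).continuousAt
        (by fun_prop)
    exact continuousOn_const.mul ((this.mul (by fun_prop)).mul (by fun_prop))

lemma HD.bound {n : ℕ} {f f1 f2 : ℝ → ℝ} (h : HD n f f1 f2) {x : ℝ} (h0 : 0 ≤ x) (h1 : x < 1) :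
    -2 * f x ≤ (n + 1) * ((1 - x) * f1 x) := by
  have o := h.ode x h1
  have c := h.conc x h1
  have : 0 ≤ x * (1 - x) := mul_nonneg h0 (by linarith)
  nlinarith

lemma zeta_formula {A B : ℝ} (hA : 0 < A) {n : ℕ} {f1 f2 : ℝ → ℝ} (h : HD n (Fhyp n) f1 f2)
    {x : ℝ} (hx : x < 1) :
    ((n:ℝ) + 1) * zetaDisp A B n x
      = Fhyp n x * (n * (1 - x) + 2 * ((A + B) / A) * x) + x * (1 - x) * f1 x := by
  have i := int_formula h (x := x) (y := 1) zero_le_one (by linarith)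
  simp only [one_mul, one_pow] at i
  unfold zetaDisp
  rw [mul_add, i]
  have hn : (n:ℝ) + 1 ≠ 0 := by positivity
  field_simp
  ring

lemma part_two {A B : ℝ} (hA : 0 < A) (hAB : A + 2 * B ≤ 0) {n : ℕ} (hn : 1 ≤ n)
    {f1 f2 : ℝ → ℝ} (h : HD n (Fhyp n) f1 f2) {x : ℝ} (hx : x ≤ 0) : zetaDisp A B n x ≠ 0 := by
  intro hz
  have z := zeta_formula (B := B) hA h (x := x) (by linarith)
  rw [hz, mul_zero] at z
  have hf := h.pos x (by linarith)
  have hf1 := h.neg x (by linarith)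
  have hn' : (1:ℝ) ≤ n := by exact_mod_cast hn
  have k : (A + B) / A ≤ 1 / 2 := by rw [div_le_iff₀ hA]; linarith
  have t1 : 0 ≤ x * (1 - x) * f1 x := by
    have : x * (1 - x) ≤ 0 := mul_nonpos_of_nonpos_of_nonneg hx (by linarith)
    exact mul_nonneg_of_nonpos_of_nonpos this hf1.le
  have t2 : 0 < n * (1 - x) + 2 * ((A + B) / A) * x := by nlinarith
  nlinarith [mul_pos hf t2]

lemma part_three {A B : ℝ} (hA : 0 < A) (hAB : 0 ≤ A + 2 * B) {n : ℕ} (hn : 2 ≤ n)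
    {f1 f2 : ℝ → ℝ} (h : HD n (Fhyp n) f1 f2) {x : ℝ} (hx : x ∈ Icc (0:ℝ) 1) :
    zetaDisp A B n x ≠ 0 := by
  have hn' : (2:ℝ) ≤ n := by exact_mod_cast hn
  rcases eq_or_lt_of_le hx.2 with rfl | hx1
  · apply ne_of_gt
    unfold zetaDisp
    have a1 : 0 ≤ Fhyp n 1 * (1 - 1 + (A + 2 * B) / (A * ((n : ℝ) + 1)) * 1) := by
      apply mul_nonneg h.one
      have : 0 ≤ (A + 2 * B) / (A * ((n : ℝ) + 1)) := by positivity
      linarith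
    have int : ∀ a b : ℝ, 0 ≤ a → a ≤ b → b ≤ 1 → IntervalIntegrable
        (fun τ : ℝ => Fhyp n (τ * 1) * τ ^ n * (-1 + 2 * 1 * τ)) volume a b := by
      intro a b ha hab hb
      have : IntervalIntegrable (fun τ : ℝ => Fhyp n (τ * 1)) volume a b := by
        apply AntitoneOn.intervalIntegrable
        simp only [mul_one]
        apply h.anti.mono
        rw [uIcc_of_le hab]
        exact fun t ht => ht.2.trans hb
      exact (this.mul_continuousOn (by fun_prop)).mul_continuousOn (by fun_prop)
    have i1 := int_formula h (x := 1) (y := 3 / 4) (by norm_num) (by norm_num)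
    have i2 : 0 < ∫ τ in (3/4:ℝ)..1, Fhyp n (τ * 1) * τ ^ n * (-1 + 2 * 1 * τ) := by
      apply intervalIntegral.intervalIntegral_pos_of_pos_on
        (int _ _ (by norm_num) (by norm_num) le_rfl) _ (by norm_num)
      intro t ht
      have := h.pos (t * 1) (by linarith [ht.2])
      have t0 : 0 < t := by linarith [ht.1]
      have : 0 < -1 + 2 * 1 * t := by linarith [ht.1]
      positivity
    rw [← intervalIntegral.integral_add_adjacent_intervals
      (int 0 (3/4) le_rfl (by norm_num) (by norm_num)) (int (3/4) 1 (by norm_num) (by norm_num) le_rfl)]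
    have b := h.bound (x := 3 / 4 * 1) (by norm_num) (by norm_num)
    have fp := h.pos (3 / 4 * 1) (by norm_num)
    have fn := h.neg (3 / 4 * 1) (by norm_num)
    have k : 0 ≤ (3 / 4 * 1) * (1 - 3 / 4 * 1) * f1 (3 / 4 * 1)
        - (1 - 2 * (3 / 4 * 1)) * Fhyp n (3 / 4 * 1) := by
      nlinarith
    have i3 : 0 ≤ ∫ τ in (0:ℝ)..(3/4), Fhyp n (τ * 1) * τ ^ n * (-1 + 2 * 1 * τ) := by
      have : 0 ≤ ((n:ℝ) + 1) *
          ∫ τ in (0:ℝ)..(3/4), Fhyp n (τ * 1) * τ ^ n * (-1 + 2 * 1 * τ) := by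
        rw [i1]; positivity
      exact nonneg_of_mul_nonneg_right this (by positivity)
    linarith
  · intro hz
    have z := zeta_formula (B := B) hA h hx1
    rw [hz, mul_zero] at z
    have hf := h.pos x hx1
    have b := h.bound hx.1 hx1
    have hf1 := h.neg x hx1
    have k : 1 / 2 ≤ (A + B) / A := by rw [le_div_iff₀ hA]; linarith
    have c1 : -Fhyp n x ≤ (1 - x) * f1 x := by
      by_contra! hc
      nlinarith
    have c2 := mul_le_mul_of_nonneg_left c1 hx.1
    have c3 : n * (1 - x) + x ≤ n * (1 - x) + 2 * ((A + B) / A) * x := by nlinarith [hx.1]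
    have c4 := mul_le_mul_of_nonneg_left c3 hf.le
    have c5 : 0 < Fhyp n x * (n * (1 - x)) := by
      have : 0 < 1 - x := by linarith
      positivity
    nlinarith

lemma wronskian {n : ℕ} {f f1 f2 g g1 g2 : ℝ → ℝ} (h : HD n f f1 f2) (k : HD (n + 1) g g1 g2)
    {x : ℝ} (h0 : 0 < x) (h1 : x < 1) : f1 x * g x - f x * g1 x ≤ 0 := by
  have hd : ∀ y, y < 1 → HasDerivAt (fun y : ℝ => y ^ (n + 1) * (f1 y * g y - f y * g1 y))
      (((n:ℝ) + 1) * y ^ n * (f1 y * g y - f y * g1 y)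
        + y ^ (n + 1) * (f2 y * g y - f y * g2 y)) y := by
    intro y hy
    have e2 : HasDerivAt (fun τ : ℝ => τ ^ (n + 1)) (((n:ℝ) + 1) * y ^ n) y := by
      simpa using hasDerivAt_pow (n + 1) y
    have := e2.mul (((h.d1 y hy).mul (k.d0 y hy)).sub ((h.d0 y hy).mul (k.d1 y hy)))
    refine this.congr_deriv ?_
    simp only [Pi.mul_apply, Pi.sub_apply]
    ring
  have anti : AntitoneOn (fun y : ℝ => y ^ (n + 1) * (f1 y * g y - f y * g1 y)) (Ico 0 1) := by
    apply antitoneOn_of_deriv_nonpos (convex_Ico 0 1)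
    · intro y hy
      exact (hd y hy.2).continuousAt.continuousWithinAt
    · intro y hy
      rw [interior_Ico] at hy
      exact (hd y hy.2).differentiableAt.differentiableWithinAt
    · intro y hy
      rw [interior_Ico] at hy
      rw [(hd y hy.2).deriv]
      have o1 := h.ode y hy.2
      have o2 := k.ode y hy.2
      push_cast at o2
      have hy1 : 0 < 1 - y := by linarith [hy.2]
      have e : (1 - y) * (((n:ℝ) + 1) * y ^ n * (f1 y * g y - f y * g1 y)
          + y ^ (n + 1) * (f2 y * g y - f y * g2 y)) = (1 - y) * (y ^ n * f y * g1 y) := by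
        linear_combination y ^ n * g y * o1 - y ^ n * f y * o2
      rw [mul_left_cancel₀ hy1.ne' e]
      have := h.pos y hy.2
      have hg := k.neg y hy.2
      have yp := hy.1
      exact mul_nonpos_of_nonneg_of_nonpos (by positivity) hg.le
  have := anti (a := 0) (b := x) ⟨le_rfl, one_pos⟩ ⟨h0.le, h1⟩ h0.le
  simp only [ne_eq, Nat.add_eq_zero_iff, one_ne_zero, and_false, not_false_eq_true, zero_pow,
    zero_mul] at this
  by_contra! hc
  have : 0 < x ^ (n + 1) * (f1 x * g x - f x * g1 x) := by positivity
  linarith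

/-- The reduced dispersion function. -/
noncomputable def Phi (n : ℕ) (f f1 : ℝ → ℝ) (x : ℝ) : ℝ :=
  n * ((1 - x) / x) + (1 - x) * f1 x / f x

lemma zeta_Phi {A B : ℝ} (hA : 0 < A) {n : ℕ} {f1 f2 : ℝ → ℝ} (h : HD n (Fhyp n) f1 f2)
    {x : ℝ} (h0 : 0 < x) (h1 : x < 1) :
    zetaDisp A B n x = 0 ↔ Phi n (Fhyp n) f1 x = -2 * ((A + B) / A) := by
  have z := zeta_formula (B := B) hA h h1
  have hf := h.pos x h1
  have e : ((n:ℝ) + 1) * zetaDisp A B n x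
      = x * Fhyp n x * (Phi n (Fhyp n) f1 x - (-2 * ((A + B) / A))) := by
    rw [z]; unfold Phi; field_simp; ring
  have hn : (n:ℝ) + 1 ≠ 0 := by positivity
  constructor
  · intro hz
    rw [hz, mul_zero] at e
    have := (mul_eq_zero.1 e.symm).resolve_left (by positivity)
    linarith
  · intro hp
    rw [hp, sub_self, mul_zero] at e
    exact (mul_eq_zero.1 e).resolve_left hn

lemma Phi_anti {n : ℕ} {f f1 f2 : ℝ → ℝ} (h : HD n f f1 f2) {m : ℝ} (hm : 0 < m)
    (hn : 2 + m + 4 / m ≤ n) : StrictAntiOn (Phi n f f1) (Ioo 0 (n / (n + m))) := by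
  have h4 : 0 < 4 / m := by positivity
  have hnp : (0:ℝ) < n := by linarith
  have hX : (n:ℝ) / (n + m) < 1 := by rw [div_lt_one (by linarith)]; linarith
  have hd : ∀ x ∈ Ioo (0:ℝ) (n / (n + m)), HasDerivAt (Phi n f f1)
      (n * ((-1 * x - (1 - x) * 1) / x ^ 2)
        + ((-1 * f1 x + (1 - x) * f2 x) * f x - (1 - x) * f1 x * f1 x) / f x ^ 2) x := by
    intro x hx
    have hx1 : x < 1 := hx.2.trans hX
    have l : HasDerivAt (fun x : ℝ => 1 - x) (-1) x := by
      simpa using (hasDerivAt_id x).const_sub 1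
    exact ((l.div (hasDerivAt_id x) hx.1.ne').const_mul (n:ℝ)).add
      ((l.mul (h.d1 x hx1)).div (h.d0 x hx1) (h.pos x hx1).ne')
  apply strictAntiOn_of_deriv_neg (convex_Ioo _ _)
  · intro x hx
    exact (hd x hx).continuousAt.continuousWithinAt
  · intro x hx
    rw [interior_Ioo] at hx
    rw [(hd x hx).deriv]
    have hx1 : x < 1 := hx.2.trans hX
    have hx0 := hx.1
    have hf := h.pos x hx1
    have hf1 := h.neg x hx1
    have hf2 := h.conc x hx1
    have b := h.bound hx.1.le hx1
    have hX1 : m < (1 - x) * (n + m) := by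
      have := (lt_div_iff₀ (by linarith : (0:ℝ) < n + m)).1 hx.2
      linarith
    have c1 : (n:ℝ) * ((-1 * x - (1 - x) * 1) / x ^ 2) ≤ -n := by
      have : (-1 * x - (1 - x) * 1) / x ^ 2 ≤ -1 := by
        rw [div_le_iff₀ (by positivity)]; nlinarith
      nlinarith
    have c2 : -f1 x < n * f x := by
      -- multiply by (n+1)(1-x)
      have e4 : 4 ≤ m * n := by
        have : 4 / m ≤ n := by linarith
        rw [div_le_iff₀ hm] at this; linarith
      have k1 : 2 * ((n:ℝ) + m) ≤ n * (n * m) := by nlinarith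
      by_contra! hc
      have h1x : 0 < 1 - x := by linarith
      have k2 : ((n:ℝ) + 1) * (1 - x) * (n * f x) ≤ 2 * f x := by
        have := mul_le_mul_of_nonneg_left hc (by positivity : 0 ≤ ((n:ℝ) + 1) * (1 - x))
        linarith
      have k3 : ((n:ℝ) + 1) * (1 - x) * n ≤ 2 := by
        by_contra! hk
        nlinarith [mul_lt_mul_of_pos_right hk hf]
      have k4 : ((n:ℝ) + 1) * n * m < 2 * (n + m) := by
        have := mul_lt_mul_of_pos_left hX1 (by positivity : 0 < ((n:ℝ) + 1) * n)
        nlinarith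
      nlinarith
    have c3 : ((-1 * f1 x + (1 - x) * f2 x) * f x - (1 - x) * f1 x * f1 x) / f x ^ 2 < n := by
      rw [div_lt_iff₀ (by positivity)]
      have h1x : 0 < 1 - x := by linarith
      have t1 : (1 - x) * f2 x * f x ≤ 0 :=
        mul_nonpos_of_nonpos_of_nonneg (mul_nonpos_of_nonneg_of_nonpos h1x.le hf2) hf.le
      have t2 : 0 ≤ (1 - x) * (f1 x * f1 x) := mul_nonneg h1x.le (mul_self_nonneg _)
      nlinarith [mul_lt_mul_of_pos_right c2 hf]
    linarith

lemma zero_lt_X {n : ℕ} {f f1 f2 : ℝ → ℝ} (h : HD n f f1 f2) {m : ℝ} (hm : 0 < m) {x : ℝ}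
    (h0 : 0 < x) (h1 : x < 1) (hz : Phi n f f1 x = m) : x < n / (n + m) := by
  have hf := h.pos x h1
  have hf1 := h.neg x h1
  have : (1 - x) * f1 x / f x < 0 :=
    div_neg_of_neg_of_pos (mul_neg_of_pos_of_neg (by linarith) hf1) hf
  have h2 : m < n * ((1 - x) / x) := by unfold Phi at hz; linarith
  rw [lt_div_iff₀ (by positivity)]
  rw [← mul_div_assoc, lt_div_iff₀ h0] at h2
  linarith

lemma exists_zero {A B : ℝ} (hA : 0 < A) {n : ℕ} {f1 f2 : ℝ → ℝ} (h : HD n (Fhyp n) f1 f2)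
    {m : ℝ} (hm : 0 < m) (hmd : m = -2 * ((A + B) / A)) (hn : (0:ℝ) < n) :
    ∃ x ∈ Ioo (0:ℝ) (n / (n + m)), zetaDisp A B n x = 0 := by
  have hX : (n:ℝ) / (n + m) < 1 := by rw [div_lt_one (by linarith)]; linarith
  have hX0 : 0 < (n:ℝ) / (n + m) := by positivity
  have key := intermediate_value_Ioo' (a := 0) (b := (n:ℝ) / (n + m)) hX0.le
    (f := fun x => Fhyp n x * (n * (1 - x) + 2 * ((A + B) / A) * x) + x * (1 - x) * f1 x) ?_
  · have hmem : (0:ℝ) ∈ Ioo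
        (Fhyp n (n / (n + m)) * (n * (1 - n / (n + m)) + 2 * ((A + B) / A) * (n / (n + m)))
          + n / (n + m) * (1 - n / (n + m)) * f1 (n / (n + m)))
        (Fhyp n 0 * (n * (1 - 0) + 2 * ((A + B) / A) * 0) + 0 * (1 - 0) * f1 0) := by
      constructor
      · have : n * (1 - n / (n + m)) + 2 * ((A + B) / A) * (n / (n + m)) = 0 := by
          rw [show 2 * ((A + B) / A) = -m by rw [hmd]; ring]
          field_simp; ring
        rw [this, mul_zero, zero_add]
        exact mul_neg_of_pos_of_neg (mul_pos hX0 (by linarith)) (h.neg _ hX)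
      · have := h.pos 0 one_pos
        simp only [mul_zero, zero_mul, add_zero, sub_zero, mul_one]
        positivity
    obtain ⟨x, hx, hx2⟩ := key hmem
    refine ⟨x, hx, ?_⟩
    have z := zeta_formula (B := B) hA h (hx.2.trans hX)
    simp only at hx2
    rw [hx2] at z
    exact (mul_eq_zero.1 z).resolve_left (by positivity)
  · intro x hx
    have hx1 : x < 1 := hx.2.trans_lt hX
    have a := (h.d0 x hx1).continuousAt
    have b := (h.d1 x hx1).continuousAt
    apply ContinuousAt.continuousWithinAt
    fun_prop

/-- existence, uniqueness, localization and monotonicity of zeros of `ζ_n` in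
`(0,1)` when `A+B<0`; non-existence of zeros in `(-∞,0]` when `A+2B≤0`; and non-existence of
zeros in `[0,1]` when `A+2B≥0` (for `n ≥ 2`). -/
theorem zetaDisp_zeros (A B : ℝ) (hA : 0 < A) :
    (A + B < 0 →
      ∃ n₀ : ℕ, ∃ xseq : ℕ → ℝ,
        (∀ n : ℕ, n₀ ≤ n →
          xseq n ∈ Ioo (0:ℝ) 1 ∧ zetaDisp A B n (xseq n) = 0 ∧
          (∀ y ∈ Ioo (0:ℝ) 1, zetaDisp A B n y = 0 → y = xseq n) ∧
          xseq n < 1 + (A + B) / (A * n)) ∧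
        StrictMonoOn xseq (Ici n₀)) ∧
    (A + 2 * B ≤ 0 →
      ∀ n : ℕ, 1 ≤ n → ∀ x : ℝ, x ≤ 0 → zetaDisp A B n x ≠ 0) ∧
    (0 ≤ A + 2 * B →
      ∀ n : ℕ, 2 ≤ n → ∀ x ∈ Icc (0:ℝ) 1, zetaDisp A B n x ≠ 0) := by
  have hHD : ∀ n : ℕ, 2 ≤ n → ∃ f1 f2, HD n (Fhyp n) f1 f2 := HD_two
  refine ⟨?_, ?_, ?_⟩
  · intro hAB
    set m : ℝ := -2 * ((A + B) / A) with hmd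
    have hm : 0 < m := by
      have : (A + B) / A < 0 := div_neg_of_neg_of_pos hAB hA
      rw [hmd]; linarith
    have h4 : 0 < 4 / m := by positivity
    obtain ⟨n₀, hn₀⟩ := exists_nat_ge (2 + m + 4 / m)
    have hbig : ∀ n : ℕ, n₀ ≤ n → 2 + m + 4 / m ≤ (n:ℝ) := fun n hn =>
      hn₀.trans (by exact_mod_cast hn)
    have htwo : ∀ n : ℕ, n₀ ≤ n → 2 ≤ n := by
      intro n hn
      have : (2:ℝ) ≤ n := by linarith [hbig n hn]
      exact_mod_cast this
    have hex : ∀ n : ℕ, ∃ x : ℝ, n₀ ≤ n →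
        x ∈ Ioo (0:ℝ) (n / (n + m)) ∧ zetaDisp A B n x = 0 := by
      intro n
      by_cases hn : n₀ ≤ n
      · obtain ⟨f1, f2, h⟩ := hHD n (htwo n hn)
        obtain ⟨x, hx, hz⟩ := exists_zero (B := B) hA h hm hmd (by linarith [hbig n hn])
        exact ⟨x, fun _ => ⟨hx, hz⟩⟩
      · exact ⟨0, fun h => absurd h hn⟩
    choose xs hxs using hex
    have hX : ∀ n : ℕ, n₀ ≤ n → (n:ℝ) / (n + m) < 1 := by
      intro n hn
      have := hbig n hn
      rw [div_lt_one (by linarith)]; linarith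
    refine ⟨n₀, xs, ?_, ?_⟩
    · intro n hn
      obtain ⟨hx, hz⟩ := hxs n hn
      obtain ⟨f1, f2, h⟩ := hHD n (htwo n hn)
      have hb := hbig n hn
      refine ⟨⟨hx.1, hx.2.trans (hX n hn)⟩, hz, ?_, ?_⟩
      · intro y hy hyz
        have p1 := (zeta_Phi hA h hy.1 hy.2).1 hyz
        have p2 := (zeta_Phi hA h hx.1 (hx.2.trans (hX n hn))).1 hz
        exact (Phi_anti h hm hb).injOn ⟨hy.1, zero_lt_X h hm hy.1 hy.2 p1⟩ hx (p1.trans p2.symm)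
      · refine hx.2.trans_le ?_
        have hnp : (0:ℝ) < n := by linarith
        have e : (A + B) / (A * n) = -m / (2 * n) := by
          rw [hmd]; field_simp
        rw [e, div_le_iff₀ (by linarith)]
        have e2 : (1 + -m / (2 * n)) * (n + m) = n + m * (n - m) / (2 * n) := by
          field_simp; ring
        rw [e2]
        have : 0 ≤ m * (n - m) / (2 * n) :=
          div_nonneg (mul_nonneg hm.le (by linarith)) (by positivity)
        linarith
    · have step : ∀ k : ℕ, n₀ ≤ k → xs k < xs (k + 1) := by
        intro k hk
        have hk' : n₀ ≤ k + 1 := by omega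
        obtain ⟨f1, f2, h⟩ := hHD k (htwo k hk)
        obtain ⟨g1, g2, g⟩ := hHD (k + 1) (htwo _ hk')
        obtain ⟨hx, hz⟩ := hxs k hk
        obtain ⟨hy, hw⟩ := hxs (k + 1) hk'
        have hx1 := hx.2.trans (hX k hk)
        have p1 := (zeta_Phi hA h hx.1 hx1).1 hz
        have p2 := (zeta_Phi hA g hy.1 (hy.2.trans (hX _ hk'))).1 hw
        have w := wronskian h g hx.1 hx1
        have fp := h.pos _ hx1
        have gp := g.pos _ hx1
        have hlt : Phi k (Fhyp k) f1 (xs k) < Phi (k + 1) (Fhyp (k + 1 : ℕ)) g1 (xs k) := by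
          unfold Phi
          have t0 : 0 < 1 - xs k := by linarith
          have t1 : 0 < (1 - xs k) / xs k := div_pos t0 hx.1
          have t2 : (1 - xs k) * f1 (xs k) / Fhyp k (xs k)
              ≤ (1 - xs k) * g1 (xs k) / Fhyp (k + 1 : ℕ) (xs k) := by
            rw [div_le_div_iff₀ fp gp]
            nlinarith
          push_cast at t2 ⊢
          linarith
        by_contra! hle
        have hxm : xs k ∈ Ioo (0:ℝ) ((k + 1 : ℕ) / ((k + 1 : ℕ) + m)) := by
          refine ⟨hx.1, hx.2.trans ?_⟩
          have hb := hbig k hk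
          push_cast
          rw [div_lt_div_iff₀ (by linarith) (by linarith)]
          linarith
        have := (Phi_anti g hm (hbig _ hk')).antitoneOn hy hxm hle
        linarith
      intro a ha b _ hab
      exact Nat.rel_of_forall_rel_succ_of_le_of_lt (· < ·) (fun k hk => step k hk) ha hab
  · intro hAB n hn x hx
    rcases eq_or_lt_of_le hn with rfl | h2
    · exact part_two hA hAB le_rfl HD_one hx
    · obtain ⟨f1, f2, h⟩ := hHD n h2
      exact part_two hA hAB hn h hx
  · intro hAB n hn x hx
    obtain ⟨f1, f2, h⟩ := hHD n hn
    exact part_three hA hAB hn h hx
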